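/- arXiv:1207.5781 — 4 statements merged into one kernel-verified Lean document; each statement's English description precedes it below -/
import Mathlib

section
/- Let N ≥ 1 be an integer, h, p > 0, and let Q be an integer with 0 ≤ Q ≤ N. Then the function G_Q(q) = h·Σ_{i=0}^{Q} C(N,i)·q^i·(1−q)^{N−i}·(Q−i) + p·Σ_{i=Q}^{N} C(N,i)·q^i·(1−q)^{N−i}·(i−Q) is convex in q on the interval (0,1). -/
/-!
The cost `G_Q(q)` is the expectation of the convex loss `d ↦ h (Q - d)⁺ + p (d - Q)⁺` under the
binomial distribution, that is, a combination of Bernstein polynomials with a convex sequence of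
coefficients. Differentiating `∑ i ≤ n, f i • B n i` gives `n` times the combination of degree
`n - 1` with coefficients `Δ f`. Hence the second derivative has coefficients `n (n - 1) Δ² f ≥ 0`,
and it is nonnegative on `[0, 1]` because Bernstein polynomials are.
-/

open Polynomial Finset
open scoped fwdDiff

section BernsteinSum

variable {R : Type*} [CommRing R]

/-- The combination of the Bernstein polynomials of degree `n` with coefficients `f 0, …, f n`.
Its value at `q ∈ [0, 1]` is the expectation of `f` under the binomial distribution with `n` trials
and success probability `q`. -/
noncomputable def bernsteinSum (n : ℕ) (f : ℕ → R) : R[X] :=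
  ∑ i ∈ range (n + 1), C (f i) * bernsteinPolynomial R n i

theorem eval_bernsteinPolynomial (n i : ℕ) (x : R) :
    (bernsteinPolynomial R n i).eval x = n.choose i * x ^ i * (1 - x) ^ (n - i) := by
  simp [bernsteinPolynomial]

theorem eval_bernsteinSum (n : ℕ) (f : ℕ → R) (x : R) :
    (bernsteinSum n f).eval x =
      ∑ i ∈ range (n + 1), f i * (n.choose i * x ^ i * (1 - x) ^ (n - i)) := by
  simp only [bernsteinSum, eval_finsetSum, eval_mul, eval_C, eval_bernsteinPolynomial]

theorem bernsteinSum_eq_sum_succ_add (n : ℕ) (f : ℕ → R) :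
    bernsteinSum n f =
      ∑ i ∈ range (n + 1), C (f (i + 1)) * bernsteinPolynomial R n (i + 1) +
        C (f 0) * bernsteinPolynomial R n 0 := by
  rw [← sum_range_succ' (fun i => C (f i) * bernsteinPolynomial R n i), sum_range_succ,
    bernsteinPolynomial.eq_zero_of_lt R n.lt_succ_self, mul_zero, add_zero, bernsteinSum]

theorem derivative_bernsteinSum (n : ℕ) (f : ℕ → R) :
    derivative (bernsteinSum n f) = n * bernsteinSum (n - 1) (Δ_[1] f) := by
  cases n with
  | zero => simp [bernsteinSum, bernsteinPolynomial]
  | succ n =>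
    have summation_by_parts :
        ∑ i ∈ range (n + 1), C (f (i + 1)) *
            (bernsteinPolynomial R n i - bernsteinPolynomial R n (i + 1)) -
          C (f 0) * bernsteinPolynomial R n 0 = bernsteinSum n (Δ_[1] f) := by
      have shift := bernsteinSum_eq_sum_succ_add n f
      simp only [bernsteinSum, fwdDiff, C_sub, sub_mul, mul_sub, sum_sub_distrib] at shift ⊢
      rw [shift, sub_sub]
    rw [Nat.add_sub_cancel, ← summation_by_parts, bernsteinSum, sum_range_succ', derivative_add,
      derivative_sum, mul_sub, mul_sum]
    simp only [derivative_C_mul, bernsteinPolynomial.derivative_succ,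
      bernsteinPolynomial.derivative_zero, Nat.add_sub_cancel, mul_left_comm, neg_mul, mul_neg,
      ← sub_eq_add_neg]

theorem iterate_derivative_two_bernsteinSum (n : ℕ) (f : ℕ → R) :
    derivative^[2] (bernsteinSum n f) =
      n * ((n - 1 : ℕ) * bernsteinSum (n - 2) (Δ_[1] ^[2] f)) := by
  rw [Function.iterate_succ_apply, Function.iterate_one, derivative_bernsteinSum,
    derivative_natCast_mul, derivative_bernsteinSum, Nat.sub_sub]
  rfl

theorem eval_bernsteinSum_nonneg [PartialOrder R] [IsOrderedRing R] {n : ℕ} {f : ℕ → R}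
    (hf : ∀ i ≤ n, 0 ≤ f i) {x : R} (hx : x ∈ Set.Icc 0 1) : 0 ≤ (bernsteinSum n f).eval x := by
  rw [eval_bernsteinSum]
  refine sum_nonneg fun i hi => mul_nonneg (hf i (mem_range_succ_iff.1 hi)) ?_
  exact mul_nonneg (mul_nonneg (Nat.cast_nonneg _) (pow_nonneg hx.1 _))
    (pow_nonneg (sub_nonneg.2 hx.2) _)

end BernsteinSum

theorem convexOn_eval_of_iterate_derivative_two_nonneg {s : Set ℝ} (hs : Convex ℝ s) {P : ℝ[X]}
    (hP : ∀ x ∈ interior s, 0 ≤ (derivative^[2] P).eval x) :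
    ConvexOn ℝ s fun x => P.eval x :=
  convexOn_of_hasDerivWithinAt2_nonneg hs P.continuous.continuousOn
    (fun x _ => (P.hasDerivAt x).hasDerivWithinAt)
    (fun x _ => ((derivative P).hasDerivAt x).hasDerivWithinAt) hP

theorem convexOn_eval_bernsteinSum (n : ℕ) {f : ℕ → ℝ} (hf : ∀ i, 0 ≤ Δ_[1] ^[2] f i) :
    ConvexOn ℝ (Set.Icc 0 1) fun q => (bernsteinSum n f).eval q := by
  refine convexOn_eval_of_iterate_derivative_two_nonneg (convex_Icc 0 1) fun q hq => ?_
  have second_differences_nonneg : 0 ≤ (bernsteinSum (n - 2) (Δ_[1] ^[2] f)).eval q :=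
    eval_bernsteinSum_nonneg (fun i _ => hf i) (interior_subset hq)
  rw [iterate_derivative_two_bernsteinSum]
  simp only [eval_mul, eval_natCast]
  positivity

theorem fwdDiff_iter_two_natCast_nonneg_of_convexOn {f : ℝ → ℝ} (hf : ConvexOn ℝ (Set.Ici 0) f)
    (i : ℕ) : 0 ≤ Δ_[1] ^[2] (fun n : ℕ => f n) i := by
  have second_difference :
      Δ_[1] ^[2] (fun n : ℕ => f n) i = f (i + 2) - f (i + 1) - (f (i + 1) - f i) := by
    simp only [Function.iterate_succ, Function.iterate_zero, Function.comp_apply, id_eq, fwdDiff,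
      Nat.cast_add, Nat.cast_one, add_assoc, one_add_one_eq_two, Nat.cast_ofNat]
  have midpoint : f (i + 1) ≤ 1 / 2 * f i + 1 / 2 * f (i + 2) := by
    have i_mem : (i : ℝ) ∈ Set.Ici 0 := Set.mem_Ici.2 (by positivity)
    have i_add_two_mem : (i + 2 : ℝ) ∈ Set.Ici 0 := Set.mem_Ici.2 (by positivity)
    have jensen := hf.2 i_mem i_add_two_mem one_half_pos.le one_half_pos.le (add_halves 1)
    simp only [smul_eq_mul] at jensen
    rwa [show 1 / 2 * (i : ℝ) + 1 / 2 * (i + 2) = i + 1 by ring] at jensen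
  rw [second_difference]
  linarith

/-- The newsvendor cost of ordering `Q` when the demand turns out to be `d`, with unit overage cost
`h` and unit underage cost `p`. -/
noncomputable def newsvendorCost (h p Q d : ℝ) : ℝ :=
  h * max (Q - d) 0 + p * max (d - Q) 0

theorem newsvendorCost_eq_affine_add_max (h p Q d : ℝ) :
    newsvendorCost h p Q d = h * (Q - d) + (h + p) * max (d - Q) 0 := by
  have overage_sub_underage : max (Q - d) 0 - max (d - Q) 0 = Q - d := by
    simpa only [neg_sub] using max_zero_sub_max_neg_zero_eq_self (Q - d)
  rw [newsvendorCost]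
  linear_combination h * overage_sub_underage

theorem convexOn_newsvendorCost {h p : ℝ} (hhp : 0 ≤ h + p) (Q : ℝ) :
    ConvexOn ℝ Set.univ (newsvendorCost h p Q) := by
  have affine_convex : ConvexOn ℝ Set.univ fun d : ℝ => h * (Q - d) := by
    refine ⟨convex_univ, fun x _ y _ a b _ _ hab => le_of_eq ?_⟩
    simp only [smul_eq_mul]
    linear_combination -(h * Q) * hab
  have underage_convex : ConvexOn ℝ Set.univ fun d : ℝ => max (d - Q) 0 :=
    ((convexOn_id convex_univ).sub (concaveOn_const Q convex_univ)).sup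
      (convexOn_const 0 convex_univ)
  rw [funext (newsvendorCost_eq_affine_add_max h p Q)]
  exact affine_convex.add (underage_convex.smul hhp)

section TruncatedSum

variable {R : Type*} [Ring R] [LinearOrder R] [IsOrderedRing R]

theorem sum_range_mul_sub_eq_sum_mul_max {w : ℕ → R} {N : ℕ} (hw : ∀ i, N < i → w i = 0) (Q : ℕ) :
    ∑ i ∈ range (Q + 1), w i * ((Q : R) - i) = ∑ i ∈ range (N + 1), w i * max ((Q : R) - i) 0 := by
  refine sum_congr_of_eq_on_inter (fun i _ hiN => ?_) (fun i _ hiQ => ?_) (fun i hiQ _ => ?_)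
  · have N_lt : N < i := by rwa [mem_range_succ_iff, not_le] at hiN
    rw [hw i N_lt, zero_mul]
  · have Q_lt : Q < i := by rwa [mem_range_succ_iff, not_le] at hiQ
    rw [max_eq_right (sub_nonpos.2 (Nat.mono_cast Q_lt.le)), mul_zero]
  · have le_Q : i ≤ Q := mem_range_succ_iff.1 hiQ
    rw [max_eq_left (sub_nonneg.2 (Nat.mono_cast le_Q))]

theorem sum_Icc_mul_sub_eq_sum_mul_max (w : ℕ → R) (Q N : ℕ) :
    ∑ i ∈ Icc Q N, w i * ((i : R) - Q) = ∑ i ∈ range (N + 1), w i * max ((i : R) - Q) 0 := by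
  have Icc_subset : Icc Q N ⊆ range (N + 1) := fun i hi =>
    mem_range_succ_iff.2 (mem_Icc.1 hi).2
  refine sum_subset_zero_on_sdiff Icc_subset (fun i hi => ?_) (fun i hi => ?_)
  · have le_Q : i ≤ Q := by
      simp only [mem_sdiff, mem_range, mem_Icc] at hi
      omega
    rw [max_eq_right (sub_nonpos.2 (Nat.mono_cast le_Q)), mul_zero]
  · have Q_le : Q ≤ i := (mem_Icc.1 hi).1
    rw [max_eq_left (sub_nonneg.2 (Nat.mono_cast Q_le))]

end TruncatedSum

theorem eval_bernsteinSum_newsvendorCost (N Q : ℕ) (h p q : ℝ) :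
    (bernsteinSum N fun i => newsvendorCost h p Q i).eval q =
      h * ∑ i ∈ range (Q + 1), (N.choose i : ℝ) * q ^ i * (1 - q) ^ (N - i) * ((Q : ℝ) - i) +
      p * ∑ i ∈ Icc Q N, (N.choose i : ℝ) * q ^ i * (1 - q) ^ (N - i) * ((i : ℝ) - Q) := by
  have weight_eq_zero (i : ℕ) (hi : N < i) :
      (N.choose i : ℝ) * q ^ i * (1 - q) ^ (N - i) = 0 := by
    simp [Nat.choose_eq_zero_of_lt hi]
  rw [sum_range_mul_sub_eq_sum_mul_max weight_eq_zero, sum_Icc_mul_sub_eq_sum_mul_max,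
    eval_bernsteinSum, mul_sum, mul_sum, ← sum_add_distrib]
  refine sum_congr rfl fun i _ => ?_
  rw [newsvendorCost]
  ring

theorem newsvendor_binomial_convex_in_q_general (N Q : ℕ) {h p : ℝ} (hhp : 0 ≤ h + p) :
    ConvexOn ℝ (Set.Icc (0 : ℝ) 1) (fun q : ℝ =>
      h * ∑ i ∈ range (Q + 1), (N.choose i : ℝ) * q ^ i * (1 - q) ^ (N - i) * ((Q : ℝ) - i) +
      p * ∑ i ∈ Icc Q N, (N.choose i : ℝ) * q ^ i * (1 - q) ^ (N - i) * ((i : ℝ) - Q)) := by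
  have cost_convex : ConvexOn ℝ (Set.Ici 0) (newsvendorCost h p Q) :=
    (convexOn_newsvendorCost hhp Q).subset (Set.subset_univ _) (convex_Ici 0)
  simp only [← eval_bernsteinSum_newsvendorCost]
  exact convexOn_eval_bernsteinSum N (fwdDiff_iter_two_natCast_nonneg_of_convexOn cost_convex)

/-- Convexity of the binomial-demand newsvendor cost `G_Q(q)` in the success
probability `q` on `(0,1)`, for fixed order quantity `0 ≤ Q ≤ N`. -/
theorem newsvendor_binomial_convex_in_q
    (N : ℕ) (hN : 1 ≤ N) (h p : ℝ) (hh : 0 < h) (hp : 0 < p)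
    (Q : ℕ) (hQ : Q ≤ N) :
    ConvexOn ℝ (Set.Ioo (0 : ℝ) 1) (fun q : ℝ =>
      h * ∑ i ∈ Finset.range (Q + 1),
            (N.choose i : ℝ) * q ^ i * (1 - q) ^ (N - i) * ((Q : ℝ) - (i : ℝ)) +
      p * ∑ i ∈ Finset.Icc Q N,
            (N.choose i : ℝ) * q ^ i * (1 - q) ^ (N - i) * ((i : ℝ) - (Q : ℝ))) :=
  (newsvendor_binomial_convex_in_q_general N Q (add_pos hh hp).le).subset
    Set.Ioo_subset_Icc_self (convex_Ioo 0 1)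
end

section
/- Let Q ≥ 1 be an integer and let F_P(λ,i) = e^{−λ}·Σ_{k=0}^{i} λ^k/k! denote the Poisson cumulative distribution function. Then the function λ ↦ Σ_{i=Q}^{∞} (1 − F_P(λ,i)) is twice differentiable on (0,∞) and its second derivative equals e^{−λ}·λ^{Q−1}/(Q−1)!, which is positive; hence λ ↦ Σ_{i=Q}^{∞} (1 − F_P(λ,i)) is convex on (0,∞). -/
/-!
For `X ~ Poisson(r)` the tail-sum formula gives `∑_{n ≥ 0} Pr{X > n} = E[X] = r`, so the infinite
sum `∑_{i ≥ Q} Pr{X > i}` equals `r - ∑_{i < Q} Pr{X > i}`, a finite expression in `r`. Since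
`d/dr Pr{X > i} = Pr{X = i}` by telescoping, its derivative is `1 - Pr{X < Q} = Pr{X ≥ Q}` and its
second derivative is `Pr{X = Q - 1}`. These are identities between absolutely
convergent series, so they persist for every real `r`.
-/

section TailSum

open Finset (HasAntidiagonal)
open Finset.HasAntidiagonal (antidiagonal mem_antidiagonal)

variable {E : Type*} [NormedAddCommGroup E] [CompleteSpace E] {a : ℕ → E}

lemma summable_comp_add_of_summable_succ_mul_norm
    (ha : Summable fun n : ℕ => (n + 1 : ℝ) * ‖a n‖) :
    Summable fun p : ℕ × ℕ => a (p.1 + p.2) := by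
  apply Summable.of_norm
  rw [← HasAntidiagonal.sigmaAntidiagonalEquivProd.summable_iff]
  refine (summable_sigma_of_nonneg fun _ => norm_nonneg _).2
    ⟨fun n => Summable.of_finite, ha.congr fun n => ?_⟩
  have norm_on_antidiagonal (p : antidiagonal n) : ‖a (p.1.1 + p.1.2)‖ = ‖a n‖ := by
    rw [mem_antidiagonal.1 p.2]
  simp [norm_on_antidiagonal]

lemma hasSum_tsum_add_of_hasSum_succ_nsmul {s : E}
    (ha : Summable fun n : ℕ => (n + 1 : ℝ) * ‖a n‖) (hs : HasSum (fun n => (n + 1) • a n) s) :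
    HasSum (fun i => ∑' j, a (i + j)) s := by
  have hsummable := summable_comp_add_of_summable_succ_mul_norm ha
  have sum_antidiagonal (n : ℕ) :
      HasSum (fun p : antidiagonal n => a (p.1.1 + p.1.2)) ((n + 1) • a n) := by
    have on_antidiagonal (p : antidiagonal n) : a (p.1.1 + p.1.2) = a n := by
      rw [mem_antidiagonal.1 p.2]
    simpa [on_antidiagonal] using hasSum_fintype fun _ : antidiagonal n => a n
  have hdouble : HasSum (fun p : ℕ × ℕ => a (p.1 + p.2)) s := by
    rw [← HasAntidiagonal.sigmaAntidiagonalEquivProd.hasSum_iff]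
    exact hs.sigma_of_hasSum sum_antidiagonal
      (HasAntidiagonal.sigmaAntidiagonalEquivProd.summable_iff.2 hsummable)
  exact hdouble.prod_fiberwise fun i => (hsummable.prod_factor i).hasSum

end TailSum

/-- The Poisson probability mass `Pr{Poisson(r) = k}`. Unlike `ProbabilityTheory.poissonPMFReal`,
the rate ranges over all of `ℝ`, so that one can differentiate in it. -/
noncomputable def poissonMass (r : ℝ) (k : ℕ) : ℝ :=
  Real.exp (-r) * r ^ k / (k.factorial : ℝ)

/-- The Poisson upper tail `Pr{Poisson(r) ≥ n}`; in terms of the cumulative distribution function,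
`poissonTail r (i + 1) = 1 - F_P(r, i)`. -/
noncomputable def poissonTail (r : ℝ) (n : ℕ) : ℝ :=
  1 - ∑ k ∈ Finset.range n, poissonMass r k

/-- The tail sum `∑_{i ≥ Q} (1 - F_P(r, i))`, with the index shifted to start at `0`. -/
noncomputable def poissonTailSum (Q : ℕ) (r : ℝ) : ℝ :=
  ∑' i : ℕ, poissonTail r (Q + i + 1)

lemma one_sub_exp_neg_mul_sum_eq_poissonTail (r : ℝ) (n : ℕ) :
    1 - Real.exp (-r) * ∑ k ∈ Finset.range n, r ^ k / (k.factorial : ℝ) = poissonTail r n := by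
  simp only [poissonTail, poissonMass, Finset.mul_sum, mul_div_assoc]

lemma poissonMass_pos {r : ℝ} (hr : 0 < r) (k : ℕ) : 0 < poissonMass r k := by
  unfold poissonMass
  positivity

lemma succ_mul_poissonMass_succ (r : ℝ) (k : ℕ) :
    (k + 1 : ℝ) * poissonMass r (k + 1) = r * poissonMass r k := by
  unfold poissonMass
  rw [Nat.factorial_succ]
  push_cast
  field_simp
  ring

lemma hasSum_poissonMass (r : ℝ) : HasSum (poissonMass r) 1 := by
  have h := (NormedSpace.expSeries_div_hasSum_exp r).mul_left (Real.exp (-r))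
  rw [← Real.exp_eq_exp_ℝ, ← Real.exp_add, neg_add_cancel, Real.exp_zero] at h
  simp only [← mul_div_assoc] at h
  exact h

lemma poissonTail_eq_tsum (r : ℝ) (n : ℕ) :
    poissonTail r n = ∑' k, poissonMass r (n + k) := by
  have hsplit := (hasSum_poissonMass r).summable.sum_add_tsum_nat_add n
  rw [(hasSum_poissonMass r).tsum_eq] at hsplit
  simpa only [poissonTail, add_comm n] using sub_eq_of_eq_add' hsplit.symm

lemma hasSum_poissonTail_succ (r : ℝ) : HasSum (fun i => poissonTail r (i + 1)) r := by
  have hmean : HasSum (fun n : ℕ => (n + 1 : ℝ) * poissonMass r (n + 1)) r := by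
    simpa only [succ_mul_poissonMass_succ, mul_one] using (hasSum_poissonMass r).mul_left r
  have hnorm : Summable fun n : ℕ => (n + 1 : ℝ) * ‖poissonMass r (n + 1)‖ :=
    hmean.summable.norm.congr fun n => by
      rw [norm_mul, Real.norm_of_nonneg (by positivity : (0 : ℝ) ≤ n + 1)]
  have htails := hasSum_tsum_add_of_hasSum_succ_nsmul hnorm
    (by simpa only [nsmul_eq_mul, Nat.cast_add, Nat.cast_one] using hmean)
  simpa only [poissonTail_eq_tsum, add_right_comm _ 1] using htails

lemma poissonTailSum_eq_sub_sum (Q : ℕ) (r : ℝ) :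
    poissonTailSum Q r = r - ∑ i ∈ Finset.range Q, poissonTail r (i + 1) := by
  have hsplit := (hasSum_poissonTail_succ r).summable.sum_add_tsum_nat_add Q
  rw [(hasSum_poissonTail_succ r).tsum_eq] at hsplit
  simpa only [poissonTailSum, add_comm Q] using eq_sub_of_add_eq' hsplit

lemma hasDerivAt_poissonMass_zero (r : ℝ) :
    HasDerivAt (fun x => poissonMass x 0) (-poissonMass r 0) r := by
  simpa [poissonMass] using (hasDerivAt_neg r).exp

lemma hasDerivAt_poissonMass_succ (r : ℝ) (k : ℕ) :
    HasDerivAt (fun x => poissonMass x (k + 1)) (poissonMass r k - poissonMass r (k + 1)) r := by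
  have h := ((hasDerivAt_neg r).exp.mul (hasDerivAt_pow (k + 1) r)).div_const
    ((k + 1).factorial : ℝ)
  refine h.congr_deriv ?_
  simp only [poissonMass, Nat.factorial_succ, Nat.add_sub_cancel]
  push_cast
  field_simp
  ring

lemma hasDerivAt_poissonTail_succ (r : ℝ) (n : ℕ) :
    HasDerivAt (fun x => poissonTail x (n + 1)) (poissonMass r n) r := by
  induction n with
  | zero => simpa [poissonTail] using (hasDerivAt_poissonMass_zero r).const_sub 1
  | succ n ih =>
    have hrec (x : ℝ) : poissonTail x (n + 2) = poissonTail x (n + 1) - poissonMass x (n + 1) := by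
      rw [poissonTail, Finset.sum_range_succ, ← sub_sub, ← poissonTail]
    simpa only [hrec, sub_sub_cancel] using ih.fun_sub (hasDerivAt_poissonMass_succ r n)

lemma hasDerivAt_poissonTailSum (Q : ℕ) (r : ℝ) :
    HasDerivAt (poissonTailSum Q) (poissonTail r Q) r := by
  rw [funext (poissonTailSum_eq_sub_sum Q)]
  exact (hasDerivAt_id r).fun_sub
    (HasDerivAt.fun_sum fun i _ => hasDerivAt_poissonTail_succ r i)

lemma deriv_poissonTailSum (Q : ℕ) : deriv (poissonTailSum Q) = fun r => poissonTail r Q :=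
  funext fun r => (hasDerivAt_poissonTailSum Q r).deriv

lemma hasDerivAt_deriv_poissonTailSum_succ (m : ℕ) (r : ℝ) :
    HasDerivAt (deriv (poissonTailSum (m + 1))) (poissonMass r m) r := by
  rw [deriv_poissonTailSum]
  exact hasDerivAt_poissonTail_succ r m

lemma strictConvexOn_poissonTailSum_succ (m : ℕ) :
    StrictConvexOn ℝ (Set.Ici 0) (poissonTailSum (m + 1)) := by
  refine strictConvexOn_of_deriv2_pos (convex_Ici 0)
    (fun r _ => (hasDerivAt_poissonTailSum _ r).continuousAt.continuousWithinAt) fun r hr => ?_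
  rw [interior_Ici] at hr
  rw [Function.iterate_succ_apply, Function.iterate_one,
    (hasDerivAt_deriv_poissonTailSum_succ m r).deriv]
  exact poissonMass_pos hr m

theorem poisson_tail_sum_convex_general
    (Q : ℕ) (hQ : 1 ≤ Q)
    (S : ℝ → ℝ)
    (hS : ∀ l : ℝ, S l = ∑' i : ℕ,
      (1 - Real.exp (-l) * ∑ k ∈ Finset.range (Q + i + 1), l ^ k / (k.factorial : ℝ))) :
    (∀ lam : ℝ, DifferentiableAt ℝ S lam ∧
      HasDerivAt (deriv S) (Real.exp (-lam) * lam ^ (Q - 1) / ((Q - 1).factorial : ℝ)) lam) ∧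
    StrictConvexOn ℝ (Set.Ici (0 : ℝ)) S := by
  obtain rfl : S = poissonTailSum Q := funext fun r => by
    simp only [hS, one_sub_exp_neg_mul_sum_eq_poissonTail, poissonTailSum]
  obtain ⟨m, rfl⟩ := Nat.exists_eq_add_of_le' hQ
  exact ⟨fun r => ⟨(hasDerivAt_poissonTailSum _ r).differentiableAt,
    hasDerivAt_deriv_poissonTailSum_succ m r⟩, strictConvexOn_poissonTailSum_succ m⟩

/-- For `Q ≥ 1`, the Poisson tail-sum `λ ↦ Σ_{i=Q}^{∞} (1 − F_P(λ,i))` is twice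
differentiable on `(0,∞)` with second derivative `e^{−λ}·λ^{Q−1}/(Q−1)! > 0`;
hence it is convex on `(0,∞)`. -/
theorem poisson_tail_sum_convex
    (Q : ℕ) (hQ : 1 ≤ Q)
    (S : ℝ → ℝ)
    (hS : ∀ l : ℝ, S l = ∑' i : ℕ,
      (1 - Real.exp (-l) * ∑ k ∈ Finset.range (Q + i + 1), l ^ k / (k.factorial : ℝ))) :
    (∀ lam : ℝ, 0 < lam →
      DifferentiableAt ℝ S lam ∧ DifferentiableAt ℝ (deriv S) lam ∧
      deriv (deriv S) lam = Real.exp (-lam) * lam ^ (Q - 1) / ((Q - 1).factorial : ℝ) ∧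
      0 < Real.exp (-lam) * lam ^ (Q - 1) / ((Q - 1).factorial : ℝ)) ∧
    ConvexOn ℝ (Set.Ioi (0 : ℝ)) S := by
  obtain ⟨hderiv, hconv⟩ := poisson_tail_sum_convex_general Q hQ S hS
  exact ⟨fun lam hlam => ⟨(hderiv lam).1, (hderiv lam).2.differentiableAt, (hderiv lam).2.deriv,
    by positivity⟩, hconv.convexOn.subset Set.Ioi_subset_Ici_self (convex_Ioi 0)⟩
end

section
/- Fix Q > 0 and h, p > 0, and define G_Q(λ) = ((h+p)/λ)·e^{−λQ} + h·Q − h/λ for λ > 0. Then G_Q admits a unique global minimizer λ* ∈ (0,∞); moreover G_Q is strictly decreasing on (0, λ*] and strictly increasing on [λ*, ∞). -/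
/-!
Writing `S t = (1 + t) e⁻ᵗ`, the derivative of the cost in the rate is
`(h - (h + p) S (lam Q)) / lam²`. On `(0, ∞)` the function `S` decreases strictly from `1` to `0`,
so the derivative changes sign exactly once, from negative to positive, at the rate where
`S (lam Q) = h / (h + p)`.
-/

open Filter Set Topology

theorem lt_of_strictAntiOn_Ioc_of_strictMonoOn_Ici {α β : Type*} [LinearOrder α] [Preorder β]
    {f : α → β} {a c x : α} (hanti : StrictAntiOn f (Ioc a c)) (hmono : StrictMonoOn f (Ici c))
    (hx : a < x) (hxc : x ≠ c) : f c < f x := by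
  rcases hxc.lt_or_gt with hlt | hgt
  · exact hanti ⟨hx, hlt.le⟩ ⟨hx.trans hlt, le_rfl⟩ hlt
  · exact hmono self_mem_Ici hgt.le hgt

/-- The survival function `t ↦ (1 + t) e⁻ᵗ` of the Erlang distribution with shape `2` and rate `1`,
on `[0, ∞)`; it carries the sign of the derivative of the newsvendor cost. The formula is used for
all real `t`, although it is a probability only for `0 ≤ t`. -/
noncomputable def erlangTwoSurvival (t : ℝ) : ℝ :=
  (1 + t) * Real.exp (-t)

theorem hasDerivAt_erlangTwoSurvival (t : ℝ) :
    HasDerivAt erlangTwoSurvival (-(t * Real.exp (-t))) t := by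
  have hexp : HasDerivAt (fun s : ℝ ↦ Real.exp (-s)) (Real.exp (-t) * -1) t :=
    (hasDerivAt_id t).neg.exp
  refine (((hasDerivAt_id t).const_add 1).mul hexp).congr_deriv ?_
  simp only [id_eq]
  ring

theorem continuous_erlangTwoSurvival : Continuous erlangTwoSurvival :=
  continuous_iff_continuousAt.2 fun t ↦ (hasDerivAt_erlangTwoSurvival t).continuousAt

theorem strictAntiOn_erlangTwoSurvival : StrictAntiOn erlangTwoSurvival (Ici 0) := by
  refine strictAntiOn_of_deriv_neg (convex_Ici 0) continuous_erlangTwoSurvival.continuousOn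
    fun t ht ↦ ?_
  rw [interior_Ici] at ht
  rw [(hasDerivAt_erlangTwoSurvival t).deriv, neg_lt_zero]
  exact mul_pos ht (Real.exp_pos _)

theorem tendsto_erlangTwoSurvival_atTop : Tendsto erlangTwoSurvival atTop (𝓝 0) := by
  have hsum := (Real.tendsto_pow_mul_exp_neg_atTop_nhds_zero 0).add
    (Real.tendsto_pow_mul_exp_neg_atTop_nhds_zero 1)
  simp only [pow_zero, pow_one, ← add_mul, add_zero] at hsum
  exact hsum

theorem surjOn_erlangTwoSurvival : SurjOn erlangTwoSurvival (Ioi 0) (Ioo 0 1) := by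
  have htendsto_zero : Tendsto erlangTwoSurvival (𝓝[>] 0) (𝓝 1) := by
    simpa [erlangTwoSurvival] using
      (continuous_erlangTwoSurvival.tendsto 0).mono_left nhdsWithin_le_nhds
  exact isPreconnected_Ioi.intermediate_value_Ioo (le_principal_iff.2 (Ioi_mem_atTop 0))
    (le_principal_iff.2 self_mem_nhdsWithin) continuous_erlangTwoSurvival.continuousOn
    tendsto_erlangTwoSurvival_atTop htendsto_zero

/-- The expected newsvendor cost of ordering `Q` under exponential demand of rate `lam`, with unit
overage cost `h` and unit underage cost `p`. It is meaningful for `0 < lam` only; at `lam = 0` it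
takes the value `h * Q` because division by zero gives zero. -/
noncomputable def exponentialNewsvendorCost (Q h p lam : ℝ) : ℝ :=
  ((h + p) / lam) * Real.exp (-(lam * Q)) + h * Q - h / lam

section exponentialNewsvendorCost

variable {Q h p lam c : ℝ}

theorem hasDerivAt_exponentialNewsvendorCost (hlam : lam ≠ 0) :
    HasDerivAt (exponentialNewsvendorCost Q h p)
      ((h - (h + p) * erlangTwoSurvival (lam * Q)) / lam ^ 2) lam := by
  have hdiv (k : ℝ) : HasDerivAt (fun x ↦ k / x) ((0 * lam - k * 1) / lam ^ 2) lam :=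
    (hasDerivAt_const lam k).div (hasDerivAt_id lam) hlam
  have hexp : HasDerivAt (fun x ↦ Real.exp (-(x * Q))) (Real.exp (-(lam * Q)) * -(1 * Q)) lam :=
    ((hasDerivAt_id lam).mul_const Q).neg.exp
  refine ((((hdiv (h + p)).mul hexp).add_const (h * Q)).sub (hdiv h)).congr_deriv ?_
  rw [erlangTwoSurvival]
  field_simp
  ring

theorem continuousOn_exponentialNewsvendorCost :
    ContinuousOn (exponentialNewsvendorCost Q h p) {0}ᶜ := fun _ hx ↦
  (hasDerivAt_exponentialNewsvendorCost hx).continuousAt.continuousWithinAt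

theorem strictAntiOn_exponentialNewsvendorCost (hQ : 0 < Q) (hhp : 0 < h + p)
    (hcrit : (h + p) * erlangTwoSurvival (c * Q) = h) :
    StrictAntiOn (exponentialNewsvendorCost Q h p) (Ioc 0 c) := by
  refine strictAntiOn_of_deriv_neg (convex_Ioc 0 c)
    (continuousOn_exponentialNewsvendorCost.mono fun x hx ↦ hx.1.ne') fun x hx ↦ ?_
  rw [interior_Ioc] at hx
  obtain ⟨hx0, hxc⟩ := hx
  have hsurvival : erlangTwoSurvival (c * Q) < erlangTwoSurvival (x * Q) :=
    strictAntiOn_erlangTwoSurvival (mul_pos hx0 hQ).le (mul_pos (hx0.trans hxc) hQ).le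
      (mul_lt_mul_of_pos_right hxc hQ)
  have hnum : h < (h + p) * erlangTwoSurvival (x * Q) :=
    hcrit.symm.trans_lt (mul_lt_mul_of_pos_left hsurvival hhp)
  rw [(hasDerivAt_exponentialNewsvendorCost hx0.ne').deriv]
  exact div_neg_of_neg_of_pos (sub_neg.2 hnum) (pow_pos hx0 2)

theorem strictMonoOn_exponentialNewsvendorCost (hQ : 0 < Q) (hhp : 0 < h + p) (hc : 0 < c)
    (hcrit : (h + p) * erlangTwoSurvival (c * Q) = h) :
    StrictMonoOn (exponentialNewsvendorCost Q h p) (Ici c) := by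
  refine strictMonoOn_of_deriv_pos (convex_Ici c)
    (continuousOn_exponentialNewsvendorCost.mono fun x hx ↦ (hc.trans_le hx).ne') fun x hx ↦ ?_
  rw [interior_Ici] at hx
  have hx0 : 0 < x := hc.trans hx
  have hsurvival : erlangTwoSurvival (x * Q) < erlangTwoSurvival (c * Q) :=
    strictAntiOn_erlangTwoSurvival (mul_pos hc hQ).le (mul_pos hx0 hQ).le
      (mul_lt_mul_of_pos_right hx hQ)
  have hnum : (h + p) * erlangTwoSurvival (x * Q) < h :=
    (mul_lt_mul_of_pos_left hsurvival hhp).trans_eq hcrit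
  rw [(hasDerivAt_exponentialNewsvendorCost hx0.ne').deriv]
  exact div_pos (sub_pos.2 hnum) (pow_pos hx0 2)

theorem exists_pos_mul_erlangTwoSurvival_eq (hQ : 0 < Q) (hh : 0 < h) (hp : 0 < p) :
    ∃ c, 0 < c ∧ (h + p) * erlangTwoSurvival (c * Q) = h := by
  have hhp : 0 < h + p := add_pos hh hp
  have hratio : h / (h + p) ∈ Ioo (0 : ℝ) 1 :=
    ⟨div_pos hh hhp, (div_lt_one hhp).2 (lt_add_of_pos_right h hp)⟩
  obtain ⟨t, ht, hteq⟩ := surjOn_erlangTwoSurvival hratio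
  refine ⟨t / Q, div_pos ht hQ, ?_⟩
  rw [div_mul_cancel₀ t hQ.ne', hteq, mul_div_cancel₀ h hhp.ne']

end exponentialNewsvendorCost

/-- The exponential-demand newsvendor cost at fixed `Q`, as a function of the rate
`λ` on `(0,∞)`, admits a unique global minimizer `λ*`; it is strictly decreasing
on `(0, λ*]` and strictly increasing on `[λ*, ∞)`. -/
theorem newsvendor_exponential_unique_min_in_rate
    (Q h p : ℝ) (hQ : 0 < Q) (hh : 0 < h) (hp : 0 < p)
    (G : ℝ → ℝ)
    (hG : ∀ lam : ℝ, G lam = ((h + p) / lam) * Real.exp (-(lam * Q)) + h * Q - h / lam) :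
    ∃ lstar : ℝ, 0 < lstar ∧
      (∀ lam : ℝ, 0 < lam → G lstar ≤ G lam) ∧
      (∀ l' : ℝ, 0 < l' → (∀ lam : ℝ, 0 < lam → G l' ≤ G lam) → l' = lstar) ∧
      StrictAntiOn G (Set.Ioc (0 : ℝ) lstar) ∧
      StrictMonoOn G (Set.Ici lstar) := by
  obtain rfl : G = exponentialNewsvendorCost Q h p := funext hG
  obtain ⟨c, hc, hcrit⟩ := exists_pos_mul_erlangTwoSurvival_eq hQ hh hp
  have hanti := strictAntiOn_exponentialNewsvendorCost hQ (add_pos hh hp) hcrit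
  have hmono := strictMonoOn_exponentialNewsvendorCost hQ (add_pos hh hp) hc hcrit
  have hlt {x : ℝ} (hx : 0 < x) (hxc : x ≠ c) :
      exponentialNewsvendorCost Q h p c < exponentialNewsvendorCost Q h p x :=
    lt_of_strictAntiOn_Ioc_of_strictMonoOn_Ici hanti hmono hx hxc
  refine ⟨c, hc, fun x hx ↦ ?_, fun x hx hmin ↦ ?_, hanti, hmono⟩
  · rcases eq_or_ne x c with rfl | hxc
    · exact le_rfl
    · exact (hlt hx hxc).le
  · by_contra hxc
    exact (hmin c hc).not_gt (hlt hx hxc)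
end

section
/- Let h, p > 0 and 0 < λ_lb < λ_ub. Define G_λ(Q) = ((h+p)/λ)·( (h/(h+p))·(λQ − 1) + e^{−λQ} ), and set Q*_lb = (1/λ_ub)·ln((h+p)/h) and Q*_ub = (1/λ_lb)·ln((h+p)/h), which are the optimal newsvendor order quantities for exponential demands with rates λ_ub and λ_lb respectively. Then for every λ ∈ [λ_lb, λ_ub] and every Q ∈ [Q*_lb, Q*_ub], G_{λ_ub}(Q*_lb) ≤ G_λ(Q) ≤ max{ G_{λ_lb}(Q*_lb), G_{λ_ub}(Q*_ub) }. -/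
/-!
Every cost is a rescaling of the unit-rate one: `G_λ(Q) = G_1(λQ) / λ`, where `G_1` is convex with
minimum value `h · log ((h + p) / h)`. Hence the optimal cost at rate `λ` is
`h · log ((h + p) / h) / λ`, which decreases in `λ`; this is the lower bound. For the upper bound,
`G_λ(Q)` is convex in `Q`, and it is quasiconvex in `λ`, being a convex function of `λ` divided by
`λ`. So on the rectangle it is at most the largest of its four corner values, and optimality
of `Q*_ub` for `λ_lb` and of `Q*_lb` for `λ_ub` makes two of the corners superfluous.
-/

section Quasiconvex

theorem quasiconvexOn_div_of_convexOn {𝕜 E : Type*} [Field 𝕜] [LinearOrder 𝕜]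
    [IsStrictOrderedRing 𝕜] [AddCommGroup E] [Module 𝕜 E] {s : Set E} {f : E → 𝕜}
    (hf : ConvexOn 𝕜 s f) (g : E →ᵃ[𝕜] 𝕜) (hg : ∀ x ∈ s, 0 < g x) :
    QuasiconvexOn 𝕜 s fun x ↦ f x / g x := by
  intro r x hx y hy a b ha hb hab
  have hs := hf.1 hx.1 hy.1 ha hb hab
  have hfx : f x ≤ r * g x := (div_le_iff₀ (hg x hx.1)).1 hx.2
  have hfy : f y ≤ r * g y := (div_le_iff₀ (hg y hy.1)).1 hy.2
  refine ⟨hs, (div_le_iff₀ (hg _ hs)).2 ?_⟩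
  calc f (a • x + b • y) ≤ a • f x + b • f y := hf.2 hx.1 hy.1 ha hb hab
    _ ≤ a • (r * g x) + b • (r * g y) := by gcongr
    _ = r * g (a • x + b • y) := by
      rw [Convex.combo_affine_apply hab]
      simp only [smul_eq_mul]
      ring

variable {𝕜 β : Type*} [Field 𝕜] [LinearOrder 𝕜] [IsStrictOrderedRing 𝕜] [LinearOrder β]

theorem le_max_of_quasiconvexOn_of_mem_Icc {s : Set 𝕜} {f : 𝕜 → β} (hf : QuasiconvexOn 𝕜 s f)
    {a b x : 𝕜} (ha : a ∈ s) (hb : b ∈ s) (hx : x ∈ Set.Icc a b) : f x ≤ max (f a) (f b) :=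
  ((hf (max (f a) (f b))).ordConnected.out ⟨ha, le_max_left _ _⟩ ⟨hb, le_max_right _ _⟩ hx).2

theorem le_max_corners_of_quasiconvexOn {s t : Set 𝕜} {f : 𝕜 → 𝕜 → β}
    (hleft : ∀ y ∈ t, QuasiconvexOn 𝕜 s fun x ↦ f x y) (hright : ∀ x ∈ s, QuasiconvexOn 𝕜 t (f x))
    {a b c d x y : 𝕜} (ha : a ∈ s) (hb : b ∈ s) (hc : c ∈ t) (hd : d ∈ t)
    (hx : x ∈ Set.Icc a b) (hy : y ∈ Set.Icc c d) :
    f x y ≤ max (max (f a c) (f a d)) (max (f b c) (f b d)) := by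
  have hyt : y ∈ t := (hright a ha).convex.ordConnected.out hc hd hy
  exact (le_max_of_quasiconvexOn_of_mem_Icc (hleft y hyt) ha hb hx).trans <|
    max_le_max (le_max_of_quasiconvexOn_of_mem_Icc (hright a ha) hc hd hy)
      (le_max_of_quasiconvexOn_of_mem_Icc (hright b hb) hc hd hy)

end Quasiconvex

/-- The expected newsvendor cost `G_λ(Q)` of ordering `Q` under exponential demand of rate
`lam`, with unit overage cost `h` and unit underage cost `p`. -/
noncomputable def expNewsvendorCost (h p lam Q : ℝ) : ℝ :=
  ((h + p) / lam) * ((h / (h + p)) * (lam * Q - 1) + Real.exp (-(lam * Q)))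

/-- The order quantity `Q*(λ)` minimizing `expNewsvendorCost h p lam`. -/
noncomputable def expNewsvendorQuantity (h p lam : ℝ) : ℝ :=
  (1 / lam) * Real.log ((h + p) / h)

section Newsvendor

variable {h p lam : ℝ}

theorem expNewsvendorCost_eq_unit_rate_div (h p lam Q : ℝ) :
    expNewsvendorCost h p lam Q = expNewsvendorCost h p 1 (lam * Q) / lam := by
  simp only [expNewsvendorCost, one_mul, div_one]
  ring

theorem convexOn_expNewsvendorCost_one (hhp : 0 ≤ h + p) :
    ConvexOn ℝ Set.univ (expNewsvendorCost h p 1) := by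
  have hexp : ConvexOn ℝ Set.univ fun x : ℝ ↦ Real.exp (-x) :=
    convexOn_exp.comp_linearMap (-LinearMap.id)
  have hlin : ConvexOn ℝ Set.univ fun x : ℝ ↦ h / (h + p) * (x - 1) :=
    (convexOn_id convex_univ).comp_affineMap
      ((h / (h + p)) • (AffineMap.id ℝ ℝ - AffineMap.const ℝ ℝ 1))
  refine ((hlin.add hexp).smul hhp).congr fun x _ ↦ ?_
  simp [expNewsvendorCost]

theorem convexOn_expNewsvendorCost (hhp : 0 ≤ h + p) (hlam : 0 ≤ lam) :
    ConvexOn ℝ Set.univ (expNewsvendorCost h p lam) := by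
  have hunit := (convexOn_expNewsvendorCost_one hhp).comp_linearMap (LinearMap.mulLeft ℝ lam)
  refine (hunit.smul (inv_nonneg.2 hlam)).congr fun Q _ ↦ ?_
  simp [expNewsvendorCost_eq_unit_rate_div h p lam Q, div_eq_inv_mul]

theorem quasiconvexOn_expNewsvendorCost_rate (hhp : 0 ≤ h + p) (Q : ℝ) :
    QuasiconvexOn ℝ (Set.Ioi 0) fun lam ↦ expNewsvendorCost h p lam Q := by
  have hunit : ConvexOn ℝ (Set.Ioi 0) fun lam ↦ expNewsvendorCost h p 1 (lam * Q) :=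
    ((convexOn_expNewsvendorCost_one hhp).comp_linearMap (LinearMap.mulRight ℝ Q)).subset
      (Set.subset_univ _) (convex_Ioi 0)
  simpa only [expNewsvendorCost_eq_unit_rate_div h p _ Q, AffineMap.id_apply] using
    quasiconvexOn_div_of_convexOn hunit (AffineMap.id ℝ ℝ) fun _ hlam ↦ hlam

-- Writing `L = log ((h + p) / h)`, the substitution `h + p = h * exp L` centres the exponential at
-- the minimizer.
theorem expNewsvendorCost_one_eq (hh : 0 < h) (hhp : 0 < h + p) (x : ℝ) :
    expNewsvendorCost h p 1 x = h * (x - 1 + Real.exp (Real.log ((h + p) / h) - x)) := by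
  rw [expNewsvendorCost, sub_eq_add_neg (Real.log _), Real.exp_add, Real.exp_log (div_pos hhp hh)]
  field_simp

theorem mul_log_le_expNewsvendorCost_one (hh : 0 < h) (hhp : 0 < h + p) (x : ℝ) :
    h * Real.log ((h + p) / h) ≤ expNewsvendorCost h p 1 x := by
  rw [expNewsvendorCost_one_eq hh hhp]
  gcongr
  linarith [Real.add_one_le_exp (Real.log ((h + p) / h) - x)]

theorem expNewsvendorCost_quantity (hh : 0 < h) (hhp : 0 < h + p) (hlam : lam ≠ 0) :
    expNewsvendorCost h p lam (expNewsvendorQuantity h p lam) =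
      h * Real.log ((h + p) / h) / lam := by
  have hscale : lam * expNewsvendorQuantity h p lam = Real.log ((h + p) / h) := by
    rw [expNewsvendorQuantity, ← mul_assoc, mul_one_div_cancel hlam, one_mul]
  rw [expNewsvendorCost_eq_unit_rate_div, hscale, expNewsvendorCost_one_eq hh hhp, sub_self,
    Real.exp_zero, sub_add_cancel]

theorem expNewsvendorCost_quantity_le (hh : 0 < h) (hhp : 0 < h + p) (hlam : 0 < lam) (Q : ℝ) :
    expNewsvendorCost h p lam (expNewsvendorQuantity h p lam) ≤ expNewsvendorCost h p lam Q := by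
  rw [expNewsvendorCost_quantity hh hhp hlam.ne', expNewsvendorCost_eq_unit_rate_div h p lam Q]
  gcongr
  exact mul_log_le_expNewsvendorCost_one hh hhp _

theorem antitoneOn_expNewsvendorCost_quantity (hh : 0 < h) (hp : 0 ≤ p) :
    AntitoneOn (fun lam ↦ expNewsvendorCost h p lam (expNewsvendorQuantity h p lam))
      (Set.Ioi 0) := by
  intro lam (hlam : 0 < lam) mu (hmu : 0 < mu) hle
  have hhp : 0 < h + p := by positivity
  have hlog : 0 ≤ Real.log ((h + p) / h) :=
    Real.log_nonneg ((one_le_div hh).2 (le_add_of_nonneg_right hp))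
  simp only [expNewsvendorCost_quantity hh hhp hlam.ne', expNewsvendorCost_quantity hh hhp hmu.ne']
  gcongr

end Newsvendor

/-- Cost bounds for the exponential-demand newsvendor over a confidence interval
`[λ_lb, λ_ub]` for the rate: for every `λ ∈ [λ_lb, λ_ub]` and every order quantity
`Q ∈ [Q*_lb, Q*_ub]`, the cost `G_λ(Q)` lies between `G_{λ_ub}(Q*_lb)` and
`max{G_{λ_lb}(Q*_lb), G_{λ_ub}(Q*_ub)}`. -/
theorem newsvendor_exponential_cost_bounds
    (h p : ℝ) (hh : 0 < h) (hp : 0 < p)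
    (lamlb lamub : ℝ) (hlb : 0 < lamlb) (hlbub : lamlb < lamub)
    (G : ℝ → ℝ → ℝ)
    (hG : ∀ lam Q : ℝ, G lam Q =
      ((h + p) / lam) * ((h / (h + p)) * (lam * Q - 1) + Real.exp (-(lam * Q))))
    (Qslb Qsub : ℝ)
    (hQslb : Qslb = (1 / lamub) * Real.log ((h + p) / h))
    (hQsub : Qsub = (1 / lamlb) * Real.log ((h + p) / h)) :
    ∀ lam ∈ Set.Icc lamlb lamub, ∀ Q ∈ Set.Icc Qslb Qsub,
      G lamub Qslb ≤ G lam Q ∧ G lam Q ≤ max (G lamlb Qslb) (G lamub Qsub) := by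
  intro lam hlam Q hQ
  obtain rfl : G = expNewsvendorCost h p := funext₂ hG
  obtain rfl : Qslb = expNewsvendorQuantity h p lamub := hQslb
  obtain rfl : Qsub = expNewsvendorQuantity h p lamlb := hQsub
  have hhp : 0 < h + p := add_pos hh hp
  have hub : 0 < lamub := hlb.trans hlbub
  have hlam_pos : 0 < lam := hlb.trans_le hlam.1
  constructor
  · exact (antitoneOn_expNewsvendorCost_quantity hh hp.le hlam_pos hub hlam.2).trans
      (expNewsvendorCost_quantity_le hh hhp hlam_pos Q)
  · have hcorners := le_max_corners_of_quasiconvexOn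
      (fun Q _ ↦ quasiconvexOn_expNewsvendorCost_rate hhp.le Q)
      (fun mu (hmu : 0 < mu) ↦ (convexOn_expNewsvendorCost hhp.le hmu.le).quasiconvexOn)
      hlb hub (Set.mem_univ _) (Set.mem_univ _) hlam hQ
    rwa [max_eq_left (expNewsvendorCost_quantity_le hh hhp hlb _),
      max_eq_right (expNewsvendorCost_quantity_le hh hhp hub _)] at hcorners
end
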